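/- Suppose f_1,…,f_n : ℝ → ℝ are continuous and linearly independent functions such that f_1∧⋯∧f_n/Δ_n, defined on points with pairwise distinct coordinates, extends continuously to ℝ^n. Then for any subset {i_1 < i_2 < ⋯ < i_k} ⊆ {1,2,…,n}, the function f_{i_1}∧⋯∧f_{i_k}/Δ_k, defined on points of ℝ^k with pairwise distinct coordinates, extends continuously to ℝ^k. -/

import Mathlib

open Finset

/-- Vandermonde determinant Δ_n(x) = ∏_{i<j} (x_i - x_j). -/
noncomputable def vdm {n : ℕ} (x : Fin n → ℝ) : ℝ :=
  ∏ i, ∏ j ∈ Finset.Ioi i, (x i - x j)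

/-- f_1 ∧ ⋯ ∧ f_n (x) = det [f_i(x_j)]. -/
noncomputable def wedge {n : ℕ} (f : Fin n → ℝ → ℝ) (x : Fin n → ℝ) : ℝ :=
  Matrix.det (Matrix.of fun i j => f i (x j))

/-- `F` is a continuous extension to ℝ^n of the ratio (f_1∧⋯∧f_n)/Δ_n, which is
defined on points with pairwise distinct coordinates. -/
def ExtendsRatio {n : ℕ} (f : Fin n → ℝ → ℝ) (F : (Fin n → ℝ) → ℝ) : Prop :=
  Continuous F ∧ ∀ x : Fin n → ℝ, Function.Injective x → F x = wedge f x / vdm x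

theorem vdm_cons {m : ℕ} (y : ℝ) (x : Fin m → ℝ) :
    vdm (Fin.cons y x : Fin (m+1) → ℝ) = (∏ i, (y - x i)) * vdm x := by
  unfold vdm
  rw [Fin.prod_univ_succ, Fin.prod_Ioi_zero]
  simp [Fin.prod_Ioi_succ]

theorem wedge_cons {m : ℕ} (f : Fin (m+1) → ℝ → ℝ) (y : ℝ) (x : Fin m → ℝ) :
    wedge f (Fin.cons y x : Fin (m+1) → ℝ)
      = ∑ i : Fin (m+1), f i y * ((-1) ^ (i : ℕ) * wedge (f ∘ i.succAbove) x) := by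
  unfold wedge
  rw [Matrix.det_succ_column_zero]
  refine Finset.sum_congr rfl fun i _ => ?_
  have : (Matrix.of fun i j => f i ((Fin.cons y x : Fin (m+1) → ℝ) j)).submatrix
      i.succAbove Fin.succ = Matrix.of fun a b => (f ∘ i.succAbove) a (x b) := by
    ext a b; simp
  rw [this]
  simp only [Matrix.of_apply, Fin.cons_zero]
  ring

theorem vdm_ne_zero {m : ℕ} (x : Fin m → ℝ) (hx : Function.Injective x) : vdm x ≠ 0 := by
  unfold vdm
  refine Finset.prod_ne_zero_iff.2 fun i _ => Finset.prod_ne_zero_iff.2 fun j hj => ?_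
  rw [sub_ne_zero]
  exact fun h => (Finset.mem_Ioi.1 hj).ne (hx h)

theorem wedge_cons_eq {m : ℕ} (f : Fin (m+1) → ℝ → ℝ) (F : (Fin (m+1) → ℝ) → ℝ)
    (hF : ExtendsRatio f F) (y : ℝ) (x : Fin m → ℝ) (hx : Function.Injective x) :
    F (Fin.cons y x) * ∏ i, (y - x i)
      = ∑ i : Fin (m+1), f i y * ((-1) ^ (i : ℕ) * (wedge (f ∘ i.succAbove) x / vdm x)) := by
  have hv := vdm_ne_zero x hx
  have h1 : F (Fin.cons y x) * ((∏ i, (y - x i)) * vdm x)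
      = wedge f (Fin.cons y x : Fin (m+1) → ℝ) := by
    by_cases hy : ∃ i, x i = y
    · obtain ⟨i, hi⟩ := hy
      rw [Finset.prod_eq_zero (Finset.mem_univ i) (by rw [hi, sub_self])]
      rw [zero_mul, mul_zero]
      unfold wedge
      refine (Matrix.det_zero_of_column_eq (Fin.succ_ne_zero i).symm fun a => ?_).symm
      simp [hi]
    · have hinj : Function.Injective (Fin.cons y x : Fin (m+1) → ℝ) :=
        Fin.cons_injective_iff.2 ⟨fun ⟨i, hi⟩ => hy ⟨i, hi⟩, hx⟩
      have := vdm_ne_zero _ hinj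
      rw [hF.2 _ hinj, ← vdm_cons, div_mul_cancel₀ _ this]
  rw [wedge_cons, ← mul_assoc] at h1
  rw [eq_div_of_mul_eq hv h1, Finset.sum_div]
  refine Finset.sum_congr rfl fun i _ => ?_
  ring

theorem step_extend {m : ℕ} (f : Fin (m+1) → ℝ → ℝ) (hli : LinearIndependent ℝ f)
    (F : (Fin (m+1) → ℝ) → ℝ) (hF : ExtendsRatio f F) (j : Fin (m+1)) :
    ∃ G, ExtendsRatio (f ∘ j.succAbove) G := by
  have key : ∀ w : Fin (m+1) → ℝ, ∃ G : (Fin m → ℝ) → ℝ, Continuous G ∧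
      ∀ x, Function.Injective x → G x = ∑ i : Fin (m+1),
        w i * ((-1) ^ (i : ℕ) * (wedge (f ∘ i.succAbove) x / vdm x)) := by
    intro w
    have hw : w ∈ Submodule.span ℝ (Set.range (flip f)) := by
      rw [span_flip_eq_top_iff_linearIndependent.2 hli]; trivial
    induction hw using Submodule.span_induction with
    | mem w h =>
      obtain ⟨y, rfl⟩ := h
      refine ⟨fun x => F (Fin.cons y x) * ∏ i, (y - x i), ?_, fun x hx =>
        wedge_cons_eq f F hF y x hx⟩
      have hc : Continuous fun x : Fin m → ℝ => (Fin.cons y x : Fin (m+1) → ℝ) :=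
        continuous_const.finCons continuous_id
      exact (hF.1.comp hc).mul (by fun_prop)
    | zero => exact ⟨0, continuous_zero, fun x _ => by simp⟩
    | add a b _ _ ha hb =>
      obtain ⟨G, hG, h⟩ := ha
      obtain ⟨G', hG', h'⟩ := hb
      refine ⟨fun x => G x + G' x, hG.add hG', fun x hx => ?_⟩
      beta_reduce
      rw [h x hx, h' x hx, ← Finset.sum_add_distrib]
      refine Finset.sum_congr rfl fun i _ => ?_
      rw [Pi.add_apply, add_mul]
    | smul c a _ ha =>
      obtain ⟨G, hG, h⟩ := ha
      refine ⟨fun x => c * G x, continuous_const.mul hG, fun x hx => ?_⟩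
      beta_reduce
      rw [h x hx, Finset.mul_sum]
      refine Finset.sum_congr rfl fun i _ => ?_
      rw [Pi.smul_apply, smul_eq_mul, mul_assoc]
  obtain ⟨G, hG, h⟩ := key (Pi.single j ((-1) ^ (j : ℕ)))
  refine ⟨G, hG, fun x hx => ?_⟩
  rw [h x hx, Finset.sum_eq_single j (fun b _ hb => by simp [hb]) (by simp)]
  rw [Pi.single_eq_same, ← mul_assoc, ← mul_pow]
  simp

/-- Lemma 4.1: if `f_1,…,f_n` are continuous, linearly independent and
(f_1∧⋯∧f_n)/Δ_n extends continuously to ℝ^n, then for any subset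
{i_1 < ⋯ < i_k} ⊆ {1,…,n} the ratio (f_{i_1}∧⋯∧f_{i_k})/Δ_k extends
continuously to ℝ^k. -/
theorem minors_extend (n : ℕ) (f : Fin n → ℝ → ℝ)
    (hf : ∀ i, Continuous (f i))
    (hli : LinearIndependent ℝ f)
    (F : (Fin n → ℝ) → ℝ) (hF : ExtendsRatio f F) :
    ∀ (k : ℕ) (ι : Fin k → Fin n), StrictMono ι →
      ∃ Fk : (Fin k → ℝ) → ℝ, ExtendsRatio (f ∘ ι) Fk := by
  induction n with
  | zero =>
    intro k ι hι
    have hk : k = 0 := by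
      have := Fintype.card_le_of_injective ι hι.injective
      simpa using this
    subst hk
    refine ⟨F, hF.1, fun x hx => ?_⟩
    have e : f ∘ ι = f := Subsingleton.elim _ _
    rw [hF.2 x hx, e]
  | succ m ih =>
    intro k ι hι
    by_cases hs : Function.Surjective ι
    · have hk : k = m + 1 := by
        simpa using Fintype.card_of_bijective ⟨hι.injective, hs⟩
      subst hk
      have : ι = id := by
        have h := Subsingleton.elim (hι.orderIsoOfSurjective ι hs) (OrderIso.refl _)
        funext i
        exact congrArg (fun e : Fin (m+1) ≃o Fin (m+1) => e i) h
      subst this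
      exact ⟨F, hF⟩
    · unfold Function.Surjective at hs
      push Not at hs
      obtain ⟨j, hj⟩ := hs
      choose κ hκ using fun i => Fin.exists_succAbove_eq (hj i)
      have hκm : StrictMono κ := fun a b hab => by
        have := hι hab
        rw [← hκ a, ← hκ b] at this
        exact (Fin.strictMono_succAbove j).lt_iff_lt.1 this
      obtain ⟨G, hG⟩ := step_extend f hli F hF j
      have := ih (f ∘ j.succAbove) (fun i => hf _)
        (hli.comp _ (Fin.strictMono_succAbove j).injective) G hG k κ hκm
      have e : ι = j.succAbove ∘ κ := funext fun i => (hκ i).symm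
      rw [e, ← Function.comp_assoc]
      exact this
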